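/- arXiv:1701.06082 — 5 statements merged into one kernel-verified Lean document; each statement's English description precedes it below -/
import Mathlib

section
/- Let R be a commutative ring with identity, M a unitary R-module, and S a multiplicative closed set in R such that S(K) ∩ S = ∅ for every submodule K of M. Then a submodule N of M is a maximal submodule of M if and only if N_S is a maximal submodule of M_S. -/
/-- `S(K)` for a submodule `K` of an `R`-module `M`: the set of elements of `R` not prime
to `K`, i.e. `{r : R | r • m ∈ K for some m ∈ M with m ∉ K}`. -/
def notPrimeTo {R : Type*} [CommRing R] {M : Type*} [AddCommGroup M] [Module R M]
    (K : Submodule R M) : Set R :=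
  {r : R | ∃ m : M, m ∉ K ∧ r • m ∈ K}

/-- Lemma 3.21: let `S` be a multiplicative closed set in `R` with `S(K) ∩ S = ∅` for every
submodule `K` of `M`.  Then a submodule `N` of `M` is a maximal submodule of `M` iff
`N_S = N.localized S` is a maximal submodule of `M_S`.  (Maximal submodules are exactly the
coatoms of the submodule lattice.) -/
theorem isCoatom_iff_localized {R : Type*} [CommRing R] {M : Type*} [AddCommGroup M]
    [Module R M] (S : Submonoid R)
    (hS : ∀ K : Submodule R M, notPrimeTo K ∩ (S : Set R) = ∅) (N : Submodule R M) :
    IsCoatom N ↔ IsCoatom (N.localized S) := by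
  have key : ∀ (K : Submodule R M) (x : M),
      LocalizedModule.mkLinearMap S M x ∈ K.localized S → x ∈ K := by
    intro K x hx
    obtain ⟨m, hm, s, h⟩ := (Submodule.mem_localized' _ _ _ _ _).1 hx
    rw [IsLocalizedModule.mk'_eq_iff, ← LinearMap.map_smul_of_tower,
      IsLocalizedModule.eq_iff_exists S] at h
    obtain ⟨c, hc⟩ := h
    by_contra hxK
    have : ((c * s : S) : R) ∈ notPrimeTo K ∩ (S : Set R) := by
      refine ⟨⟨x, hxK, ?_⟩, (c * s).2⟩
      have h2 : ((c * s : S) : R) • x = c • s • x := by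
        rw [← mul_smul]; rfl
      rw [h2, ← hc]
      exact K.smul_mem (c : R) hm
    rw [hS K] at this
    exact this
  let gi := Submodule.localized'gi (Localization S) S (LocalizedModule.mkLinearMap S M)
  let e : Submodule R M ≃o Submodule (Localization S) (LocalizedModule S M) :=
    { Equiv.ofBijective (fun K : Submodule R M => K.localized S)
        ⟨fun K L h => by
          have h : K.localized S = L.localized S := h
          apply le_antisymm
          · exact fun x hx => key L x (h ▸ gi.gc.le_u_l K hx)
          · exact fun x hx => key K x (h ▸ gi.gc.le_u_l L hx), gi.l_surjective⟩ with
      map_rel_iff' := fun {K L} =>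
        ⟨fun h x hx => key L x (h (gi.gc.le_u_l K hx)), fun h => gi.gc.monotone_l h⟩ }
  exact (e.isCoatom_iff N).symm
end

section
/- Let R be a commutative ring with identity, M a unitary R-module, and S a multiplicative closed set in R such that S(K) ∩ S = ∅ for every submodule K of M. Then for every submodule N of M, Rad(N_S) = (Rad N)_S, where Rad denotes the intersection of all maximal submodules. -/
/-- `Rad N` for a submodule `N` of `M`: the intersection of all maximal submodules of the
module `N`.  A maximal submodule of `N` is a submodule `L` of `M` with `L < N` such that no
submodule of `M` lies strictly between `L` and `N`.  (The intersection with `N` realises the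
convention that the empty intersection of submodules of `N` is `N` itself.) -/
def radSubmodule {R : Type*} [CommRing R] {M : Type*} [AddCommGroup M] [Module R M]
    (N : Submodule R M) : Submodule R M :=
  N ⊓ sInf {L : Submodule R M | L < N ∧ ∀ K : Submodule R M, L < K → K ≤ N → K = N}

/-- Lemma 3.22 (1): let `S` be a multiplicative closed set in `R` with `S(K) ∩ S = ∅` for
every submodule `K` of `M`.  Then `Rad (N_S) = (Rad N)_S` for every submodule `N` of `M`,
where `N_S = N.localized S`. -/
theorem rad_localized {R : Type*} [CommRing R] {M : Type*} [AddCommGroup M]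
    [Module R M] (S : Submonoid R)
    (hS : ∀ K : Submodule R M, notPrimeTo K ∩ (S : Set R) = ∅) (N : Submodule R M) :
    radSubmodule (N.localized S) = (radSubmodule N).localized S := by
  have hle : ∀ K L : Submodule R M, K.localized S ≤ L.localized S ↔ K ≤ L := by
    intro K L
    constructor
    · intro h x hx
      have hx' : LocalizedModule.mkLinearMap S M x ∈ L.localized S := h ⟨x, hx, 1, by simp⟩
      obtain ⟨l, hl, s, hs⟩ := hx'
      rw [← IsLocalizedModule.mk'_one S (LocalizedModule.mkLinearMap S M) x,
        IsLocalizedModule.mk'_eq_mk'_iff] at hs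
      obtain ⟨u, hu⟩ := hs
      have hmem : ((u * s : S) : R) • x ∈ L := by
        have h1 : u • (1 : S) • l ∈ L := L.smul_of_tower_mem u (L.smul_of_tower_mem (1 : S) hl)
        have h2 : u • s • x ∈ L := by first | (rw [hu]; exact h1) | (rw [← hu]; exact h1)
        rw [smul_smul] at h2
        exact h2
      by_contra hxL
      have hne : ((u * s : S) : R) ∈ notPrimeTo L ∩ (S : Set R) :=
        ⟨⟨x, hxL, hmem⟩, (u * s).2⟩
      rw [hS L] at hne
      exact hne
    · intro h
      exact (Submodule.localized'gi (Localization S) S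
        (LocalizedModule.mkLinearMap S M)).gc.monotone_l h
  have hsurj : Function.Surjective
      (fun K : Submodule R M => K.localized S) :=
    (Submodule.localized'gi (Localization S) S (LocalizedModule.mkLinearMap S M)).l_surjective
  let e : Submodule R M ≃o Submodule (Localization S) (LocalizedModule S M) :=
    RelIso.ofSurjective (OrderEmbedding.ofMapLEIff (fun K : Submodule R M => K.localized S) hle)
      hsurj
  change radSubmodule (e N) = e (radSubmodule N)
  unfold radSubmodule
  rw [e.map_inf, e.map_sInf_eq_sInf_symm_preimage]
  congr 2
  ext L
  obtain ⟨L, rfl⟩ := e.surjective L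
  simp only [Set.mem_setOf_eq, Set.mem_preimage, OrderIso.symm_apply_apply, e.lt_iff_lt,
    e.surjective.forall, e.le_iff_le, e.injective.eq_iff]
end

section
/- Let R be a commutative ring with identity, M a unitary R-module, and S a multiplicative closed set in R such that S(K) ∩ S = ∅ for every submodule K of M. Then P(M_S) = (P(M))_S, where P(M) is the sum of all radical submodules of M (submodules N with Rad N = N) and P(M_S) is the sum of all radical submodules of M_S. -/
/-- `P(M)`: the sum of all radical submodules of `M`, i.e. of all submodules `N` with
`Rad N = N`. -/
def radicalSum (R M : Type*) [CommRing R] [AddCommGroup M] [Module R M] : Submodule R M :=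
  sSup {N : Submodule R M | radSubmodule N = N}

theorem radSubmodule_eq_iff {R : Type*} [CommRing R] {M : Type*} [AddCommGroup M] [Module R M]
    (N : Submodule R M) : radSubmodule N = N ↔ ∀ L : Submodule R M, ¬ L ⋖ N := by
  unfold radSubmodule
  rw [inf_eq_left]
  constructor
  · intro h L hL
    have : N ≤ L := h.trans (sInf_le ⟨hL.1, fun K h1 h2 => by
      by_contra h3
      exact hL.2 h1 (lt_of_le_of_ne h2 h3)⟩)
    exact absurd hL.1 (not_lt_of_ge this)
  · intro h
    apply le_sInf
    rintro L ⟨h1, h2⟩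
    exact absurd ⟨h1, fun K h3 h4 => h4.ne (h2 K h3 h4.le)⟩ (h L)

theorem radicalSum_orderIso {R : Type*} [CommRing R] {M : Type*} [AddCommGroup M] [Module R M]
    {R' : Type*} [CommRing R'] {M' : Type*} [AddCommGroup M'] [Module R' M']
    (e : Submodule R M ≃o Submodule R' M') : radicalSum R' M' = e (radicalSum R M) := by
  unfold radicalSum
  rw [e.map_sSup_eq_sSup_symm_preimage]
  congr 1
  ext N
  simp only [Set.mem_setOf_eq, Set.mem_preimage, radSubmodule_eq_iff]
  constructor
  · intro h L hL
    apply h (e L)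
    simpa using (apply_covBy_apply_iff e).2 hL
  · intro h L hL
    exact h (e.symm L) ((apply_covBy_apply_iff e.symm).2 hL)

/-- Lemma 3.22 (3): let `S` be a multiplicative closed set in `R` with `S(K) ∩ S = ∅` for
every submodule `K` of `M`.  Then `P(M_S) = (P(M))_S`. -/
theorem radicalSum_localized {R : Type*} [CommRing R] {M : Type*} [AddCommGroup M]
    [Module R M] (S : Submonoid R)
    (hS : ∀ K : Submodule R M, notPrimeTo K ∩ (S : Set R) = ∅) :
    radicalSum (Localization S) (LocalizedModule S M) = (radicalSum R M).localized S := by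
  let f := LocalizedModule.mkLinearMap S M
  let gi := Submodule.localized'gi (Localization S) S f
  have key : ∀ K : Submodule R M, ((K.localized S).restrictScalars R).comap f = K := by
    intro K
    have hK : ∀ s : S, ∀ m : M, s • m ∈ K → m ∈ K := by
      intro s m hm
      by_contra hn
      have : (s : R) ∈ notPrimeTo K ∩ (S : Set R) := ⟨⟨m, hn, hm⟩, s.2⟩
      rw [hS K] at this
      exact this
    refine le_antisymm ?_ (gi.gc.le_u_l K)
    rintro m ⟨k, hk, s, h⟩
    rw [IsLocalizedModule.mk'_eq_iff, ← LinearMap.map_smul_of_tower] at h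
    obtain ⟨c, hc⟩ := (IsLocalizedModule.eq_iff_exists S f).1 h
    apply hK s
    apply hK c
    rw [← hc]
    exact K.smul_of_tower_mem c hk
  let e : Submodule R M ≃o Submodule (Localization S) (LocalizedModule S M) :=
    { toFun := fun K => K.localized S
      invFun := fun N => (N.restrictScalars R).comap f
      left_inv := key
      right_inv := fun N => gi.l_u_eq N
      map_rel_iff' := by
        intro K L
        change K.localized S ≤ L.localized S ↔ K ≤ L
        refine (gi.gc K (L.localized S)).trans ?_
        rw [key L] }
  exact radicalSum_orderIso e
end

section
/- Let R be a commutative ring with identity, M a unitary R-module, and S a multiplicative closed set in R such that S(K) ∩ S = ∅ for every proper submodule K of M. Then M is coatomic if and only if M_S is coatomic. -/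
/-- A module `M` is *coatomic* if every proper submodule of `M` is contained in a maximal
submodule of `M` (maximal submodules are the coatoms of the submodule lattice). -/
def IsCoatomicModule (R M : Type*) [CommRing R] [AddCommGroup M] [Module R M] : Prop :=
  ∀ N : Submodule R M, N ≠ ⊤ → ∃ L : Submodule R M, IsCoatom L ∧ N ≤ L

theorem comap_localized_eq {R : Type*} [CommRing R] {M : Type*} [AddCommGroup M]
    [Module R M] (S : Submonoid R)
    (hS : ∀ K : Submodule R M, K ≠ ⊤ → notPrimeTo K ∩ (S : Set R) = ∅) (K : Submodule R M) :
    ((K.localized' (Localization S) S (LocalizedModule.mkLinearMap S M)).restrictScalars R).comap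
      (LocalizedModule.mkLinearMap S M) = K := by
  refine le_antisymm ?_ ((Submodule.localized'gi (Localization S) S
    (LocalizedModule.mkLinearMap S M)).gc.le_u_l K)
  intro m hm
  by_contra hmK
  have hK : K ≠ ⊤ := by rintro rfl; exact hmK trivial
  rw [Submodule.mem_comap, Submodule.restrictScalars_mem, Submodule.mem_localized'] at hm
  obtain ⟨k, hk, s, h⟩ := hm
  rw [IsLocalizedModule.mk'_eq_iff, Submonoid.smul_def, ← map_smul,
    IsLocalizedModule.eq_iff_exists S] at h
  obtain ⟨c, hc⟩ := h
  have h2 : ((c : R) * (s : R)) ∈ notPrimeTo K ∩ (S : Set R) := by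
    refine ⟨⟨m, hmK, ?_⟩, S.mul_mem c.2 s.2⟩
    rw [mul_smul]
    have := K.smul_mem (c : R) hk
    rw [Submonoid.smul_def, Submonoid.smul_def] at hc
    rwa [hc] at this
  rw [hS K hK] at h2
  exact h2

theorem coatomicModule_iff {R M : Type*} [CommRing R] [AddCommGroup M] [Module R M] :
    IsCoatomicModule R M ↔ IsCoatomic (Submodule R M) := by
  constructor
  · intro h
    exact ⟨fun N => or_iff_not_imp_left.2 (h N)⟩
  · intro h N hN
    exact (h.eq_top_or_exists_le_coatom N).resolve_left hN

/-- Proposition 3.24 (1): let `S` be a multiplicative closed set in `R` with `S(K) ∩ S = ∅`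
for every proper submodule `K` of `M`.  Then `M` is coatomic iff `M_S` is coatomic. -/
theorem isCoatomic_iff_localized {R : Type*} [CommRing R] {M : Type*} [AddCommGroup M]
    [Module R M] (S : Submonoid R)
    (hS : ∀ K : Submodule R M, K ≠ ⊤ → notPrimeTo K ∩ (S : Set R) = ∅) :
    IsCoatomicModule R M ↔ IsCoatomicModule (Localization S) (LocalizedModule S M) := by
  have gi := Submodule.localized'gi (Localization S) S (LocalizedModule.mkLinearMap S M)
  rw [coatomicModule_iff, coatomicModule_iff]
  let e : Submodule R M ≃o Submodule (Localization S) (LocalizedModule S M) :=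
    { toFun := fun K => K.localized' (Localization S) S (LocalizedModule.mkLinearMap S M)
      invFun := fun N => (N.restrictScalars R).comap (LocalizedModule.mkLinearMap S M)
      left_inv := comap_localized_eq S hS
      right_inv := fun N => gi.l_u_eq N
      map_rel_iff' := by
        intro a b
        refine (gi.gc a _).trans ?_
        have := comap_localized_eq S hS b
        exact iff_of_eq (congrArg (a ≤ ·) this) }
  exact e.isCoatomic_iff
end

section
/- Let R be a commutative ring with identity, M a unitary R-module, and S a multiplicative closed set in R such that S(K) ∩ S = ∅ for every proper submodule K of M. Then M is a local R-module if and only if M_S is a local R_S-module. -/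
/-- A module `M` is *local* if it has a largest proper submodule. -/
def IsLocalModule (R M : Type*) [CommRing R] [AddCommGroup M] [Module R M] : Prop :=
  ∃ L : Submodule R M, L ≠ ⊤ ∧ ∀ K : Submodule R M, K ≠ ⊤ → K ≤ L

/-- Proposition 3.24 (3): let `S` be a multiplicative closed set in `R` with `S(K) ∩ S = ∅`
for every proper submodule `K` of `M`.  Then `M` is a local `R`-module iff `M_S` is a local
`R_S`-module. -/
theorem isLocalModule_iff_localized {R : Type*} [CommRing R] {M : Type*} [AddCommGroup M]
    [Module R M] (S : Submonoid R)
    (hS : ∀ K : Submodule R M, K ≠ ⊤ → notPrimeTo K ∩ (S : Set R) = ∅) :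
    IsLocalModule R M ↔ IsLocalModule (Localization S) (LocalizedModule S M) := by
  have hs : ∀ (K : Submodule R M) (s : S) (m : M), s • m ∈ K → m ∈ K := by
    intro K s m h
    by_contra hm
    have hK : K ≠ ⊤ := by
      rintro rfl
      exact hm trivial
    have : (s : R) ∈ notPrimeTo K ∩ (S : Set R) := ⟨⟨m, hm, h⟩, s.2⟩
    rw [hS K hK] at this
    exact this
  let f := LocalizedModule.mkLinearMap S M
  let ext : Submodule R M → Submodule (Localization S) (LocalizedModule S M) :=
    fun K => K.localized' (Localization S) S f
  let con : Submodule (Localization S) (LocalizedModule S M) → Submodule R M :=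
    fun N => (N.restrictScalars R).comap f
  have mem_ext : ∀ K x, x ∈ ext K ↔ ∃ m ∈ K, ∃ s : S, IsLocalizedModule.mk' f m s = x :=
    fun K x => Iff.rfl
  have mem_con : ∀ N m, m ∈ con N ↔ f m ∈ N := fun N m => Iff.rfl
  have ce : ∀ K m, f m ∈ ext K → m ∈ K := by
    intro K m h
    obtain ⟨k, hk, s, e⟩ := (mem_ext _ _).1 h
    rw [IsLocalizedModule.mk'_eq_iff, ← LinearMap.map_smul_of_tower] at e
    obtain ⟨c, hc⟩ := (IsLocalizedModule.eq_iff_exists S f).1 e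
    apply hs K s
    apply hs K c
    rw [← hc]
    exact K.smul_mem (c : R) hk
  have ec : ∀ N x, x ∈ N → x ∈ ext (con N) := by
    intro N x hx
    obtain ⟨⟨m, s⟩, rfl⟩ := IsLocalizedModule.mk'_surjective S f x
    refine (mem_ext _ _).2 ⟨m, ?_, s, rfl⟩
    rw [mem_con, ← IsLocalizedModule.mk'_cancel' f m s]
    exact (N.restrictScalars R).smul_mem (s : R) hx
  have ee : ∀ N x, x ∈ ext (con N) → x ∈ N := by
    intro N x hx
    obtain ⟨m, hm, s, rfl⟩ := (mem_ext _ _).1 hx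
    have := N.smul_mem (Localization.mk 1 s) ((mem_con _ _).1 hm)
    rwa [← IsLocalizedModule.mk'_one S f, Localization.mk_eq_mk',
      IsLocalizedModule.mk'_smul_mk', one_smul, mul_one] at this
  have mono : ∀ K L, K ≤ L → ext K ≤ ext L := by
    intro K L h x hx
    obtain ⟨m, hm, s, e⟩ := (mem_ext _ _).1 hx
    exact (mem_ext _ _).2 ⟨m, h hm, s, e⟩
  have ext_ne : ∀ K, K ≠ ⊤ → ext K ≠ ⊤ := by
    intro K hK h
    refine hK (eq_top_iff.2 fun m _ => ce K m ?_)
    rw [h]; trivial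
  have con_ne : ∀ N, N ≠ ⊤ → con N ≠ ⊤ := by
    intro N hN h
    refine hN (eq_top_iff.2 fun x _ => ee N x ?_)
    rw [h]
    exact mono (con ⊤) ⊤ le_top (ec ⊤ x trivial)
  constructor
  · rintro ⟨L, hL, h⟩
    exact ⟨ext L, ext_ne L hL, fun N hN x hx => mono _ _ (h _ (con_ne N hN)) (ec N x hx)⟩
  · rintro ⟨N, hN, h⟩
    refine ⟨con N, con_ne N hN, fun K hK m hm => (mem_con _ _).2 (h _ (ext_ne K hK) ?_)⟩
    exact (mem_ext _ _).2 ⟨m, hm, 1, IsLocalizedModule.mk'_one S f m⟩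
end
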